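/- Let V be a finite vertex set. There exists a map Φ assigning to every weighted digraph G on V (with positive integer edge weights) and every ordered pair (u,v) with ‖uv‖_G < ∞ a shortest path ρ_G(u,v) from u to v in G, such that: (a) for every G, the family ρ_G is subpath-consistent, i.e. for any (u,v) and positions i ≤ j on ρ_G(u,v) = (x₀,…,x_k), the subwalk (x_i,…,x_j) equals ρ_G(x_i, x_j); and (b) whenever G′ is a subgraph of G (meaning the weight function of G′ agrees with that of G on every edge of G′ and equals ∞ elsewhere) and every edge of ρ_G(u,v) is an edge of G′, then ρ_{G′}(u,v) = ρ_G(u,v). -/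

import Mathlib

/-- The length of a walk `p` (a list of vertices) in the weighted digraph with
weight function `W`, i.e. the sum of the weights of consecutive pairs. -/
def walkLen {V : Type*} (W : V → V → ℕ∞) (p : List V) : ℕ∞ :=
  ((p.zip p.tail).map fun q => W q.1 q.2).sum

/-- `p` is a walk from `u` to `v`: it is nonempty, starts at `u`, ends at `v`,
and every consecutive pair is an edge (finite weight). -/
def IsWalk {V : Type*} (W : V → V → ℕ∞) (u v : V) (p : List V) : Prop :=
  p.head? = some u ∧ p.getLast? = some v ∧ p.Chain' fun x y => W x y ≠ ⊤

/-- The distance from `u` to `v`: the infimum of lengths of walks from `u` to `v`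
(`⊤` if there is no walk). -/
noncomputable def gdist {V : Type*} (W : V → V → ℕ∞) (u v : V) : ℕ∞ :=
  sInf {d | ∃ p, IsWalk W u v p ∧ walkLen W p = d}

/-- `p` is a shortest path from `u` to `v`: a walk from `u` to `v` whose length
equals the distance. -/
def IsShortestPath {V : Type*} (W : V → V → ℕ∞) (u v : V) (p : List V) : Prop :=
  IsWalk W u v p ∧ walkLen W p = gdist W u v

/-!
Choose among the shortest paths from `u` to `v` the shortlex-least one, for a fixed well-order on
the vertices. Lengths of walks and the shortlex order are both compatible with concatenation, so a
better replacement for a piece of this path would improve the whole path: subpaths are again least.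
If weights increase, but not along the chosen path, then the path stays shortest and every shortest
path for the new weights was already one for the old weights, so the path remains least.
-/

section

variable {V : Type*} {W W' : V → V → ℕ∞} {r : V → V → Prop} {u v x : V}
  {p q s t a a' b b' : List V}

theorem walkLen_cons_cons (W : V → V → ℕ∞) (x y : V) (p : List V) :
    walkLen W (x :: y :: p) = W x y + walkLen W (y :: p) := by
  simp [walkLen]

theorem walkLen_append_cons (W : V → V → ℕ∞) (a : List V) (x : V) (b : List V) :
    walkLen W (a ++ x :: b) = walkLen W (a ++ [x]) + walkLen W (x :: b) := by
  induction a with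
  | nil => simp [walkLen]
  | cons y a ih =>
    cases a with
    | nil => simp [walkLen]
    | cons z a =>
      simp only [List.cons_append, walkLen_cons_cons, add_assoc] at ih ⊢
      rw [ih]

theorem walkLen_mono (hW : W ≤ W') (p : List V) : walkLen W p ≤ walkLen W' p :=
  List.sum_le_sum fun q _ => hW q.1 q.2

theorem walkLen_congr (h : ∀ q ∈ p.zip p.tail, W' q.1 q.2 = W q.1 q.2) :
    walkLen W' p = walkLen W p :=
  congrArg List.sum (List.map_congr_left h)

theorem isChain_ne_top_iff_walkLen_ne_top :
    p.IsChain (fun x y => W x y ≠ ⊤) ↔ walkLen W p ≠ ⊤ := by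
  induction p with
  | nil => simp [walkLen]
  | cons x p ih =>
    cases p with
    | nil => simp [walkLen]
    | cons y p => simp [List.isChain_cons_cons, ih, walkLen_cons_cons]

theorem isWalk_iff_walkLen_ne_top :
    IsWalk W u v p ↔ p.head? = some u ∧ p.getLast? = some v ∧ walkLen W p ≠ ⊤ :=
  and_congr_right fun _ => and_congr_right fun _ => isChain_ne_top_iff_walkLen_ne_top

theorem IsWalk.walkLen_ne_top (hp : IsWalk W u v p) : walkLen W p ≠ ⊤ :=
  (isWalk_iff_walkLen_ne_top.1 hp).2.2

theorem IsWalk.of_walkLen_le (hp : IsWalk W u v p) (h : walkLen W' p ≤ walkLen W p) :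
    IsWalk W' u v p :=
  isWalk_iff_walkLen_ne_top.2 ⟨hp.1, hp.2.1, ne_top_of_le_ne_top hp.walkLen_ne_top h⟩

theorem isWalk_append_cons_iff :
    IsWalk W u v (a ++ x :: b) ↔ IsWalk W u x (a ++ [x]) ∧ IsWalk W x v (x :: b) := by
  have head_eq : (a ++ x :: b).head? = (a ++ [x]).head? := by simp
  simp only [isWalk_iff_walkLen_ne_top, walkLen_append_cons W a x b, head_eq,
    List.getLast?_append_cons, List.getLast?_singleton, List.head?_cons, ne_eq, ENat.add_eq_top,
    not_or]
  tauto

theorem gdist_le_walkLen (hp : IsWalk W u v p) : gdist W u v ≤ walkLen W p :=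
  sInf_le ⟨p, hp, rfl⟩

theorem isShortestPath_iff_forall_walkLen_le :
    IsShortestPath W u v p ↔ IsWalk W u v p ∧ ∀ q, IsWalk W u v q → walkLen W p ≤ walkLen W q := by
  refine and_congr_right fun hp => ⟨fun h q hq => h.trans_le (gdist_le_walkLen hq), fun h => ?_⟩
  refine le_antisymm (le_sInf ?_) (gdist_le_walkLen hp)
  rintro _ ⟨q, hq, rfl⟩
  exact h q hq

theorem exists_isShortestPath (h : gdist W u v ≠ ⊤) : ∃ p, IsShortestPath W u v p := by
  have walks_nonempty : {d | ∃ p, IsWalk W u v p ∧ walkLen W p = d}.Nonempty := by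
    contrapose! h
    rw [gdist, h, sInf_empty]
  exact csInf_mem walks_nonempty

theorem IsShortestPath.of_append_cons (h : IsShortestPath W u v (a ++ x :: b)) :
    IsShortestPath W u x (a ++ [x]) ∧ IsShortestPath W x v (x :: b) := by
  obtain ⟨hwalk, hmin⟩ := isShortestPath_iff_forall_walkLen_le.1 h
  obtain ⟨ha, hb⟩ := isWalk_append_cons_iff.1 hwalk
  simp only [isShortestPath_iff_forall_walkLen_le]
  refine ⟨⟨ha, fun q hq => ?_⟩, hb, fun q hq => ?_⟩
  · obtain ⟨a', rfl⟩ := List.getLast?_eq_some_iff.1 hq.2.1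
    have hle := hmin _ (isWalk_append_cons_iff.2 ⟨hq, hb⟩)
    rw [walkLen_append_cons W a, walkLen_append_cons W a'] at hle
    exact (ENat.add_le_add_iff_right hb.walkLen_ne_top).1 hle
  · obtain ⟨b', rfl⟩ := List.head?_eq_some_iff.1 hq.1
    have hle := hmin _ (isWalk_append_cons_iff.2 ⟨ha, hq⟩)
    rw [walkLen_append_cons W a x b, walkLen_append_cons W a x b'] at hle
    exact (ENat.add_le_add_iff_left ha.walkLen_ne_top).1 hle

theorem IsShortestPath.splice (h : IsShortestPath W u v (a ++ x :: b))
    (ha' : IsShortestPath W u x (a' ++ [x])) (hb' : IsShortestPath W x v (x :: b')) :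
    IsShortestPath W u v (a' ++ x :: b') := by
  obtain ⟨ha, hb⟩ := h.of_append_cons
  refine ⟨isWalk_append_cons_iff.2 ⟨ha'.1, hb'.1⟩, ?_⟩
  rw [walkLen_append_cons, ha'.2, hb'.2, ← ha.2, ← hb.2, ← walkLen_append_cons, h.2]

theorem IsShortestPath.of_le_of_walkLen_eq (hW : W ≤ W') (hp : IsShortestPath W u v p)
    (hlen : walkLen W' p = walkLen W p) : IsShortestPath W' u v p := by
  obtain ⟨hwalk, hmin⟩ := isShortestPath_iff_forall_walkLen_le.1 hp
  refine isShortestPath_iff_forall_walkLen_le.2 ⟨hwalk.of_walkLen_le hlen.le, fun q hq => ?_⟩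
  calc walkLen W' p = walkLen W p := hlen
    _ ≤ walkLen W q := hmin q (hq.of_walkLen_le (walkLen_mono hW q))
    _ ≤ walkLen W' q := walkLen_mono hW q

theorem IsShortestPath.of_ge_of_gdist_eq (hW : W ≤ W') (hq : IsShortestPath W' u v q)
    (hdist : gdist W' u v = gdist W u v) : IsShortestPath W u v q := by
  have hwalk : IsWalk W u v q := hq.1.of_walkLen_le (walkLen_mono hW q)
  refine ⟨hwalk, le_antisymm ?_ (gdist_le_walkLen hwalk)⟩
  calc walkLen W q ≤ walkLen W' q := walkLen_mono hW q
    _ = gdist W u v := hq.2.trans hdist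

theorem lex_append_append_of_length_eq (hlex : List.Lex r s t) (hlen : s.length = t.length)
    (b : List V) : List.Lex r (s ++ b) (t ++ b) := by
  induction hlex with
  | nil => simp at hlen
  | cons _ ih => exact .cons (ih (by simpa using hlen))
  | rel h => exact .rel h

theorem shortlex_append_append (h : List.Shortlex r s t) (b : List V) :
    List.Shortlex r (s ++ b) (t ++ b) := by
  rcases List.shortlex_def.1 h with hlt | ⟨hlen, hlex⟩
  · exact .of_length_lt (by simpa using hlt)
  · exact .of_lex (by simpa using hlen) (lex_append_append_of_length_eq hlex hlen b)

/-- `p` is the canonical path from `u` to `v` with respect to `r`: a shortest path that no other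
shortest path precedes in the shortlex order induced by the vertex order `r`. -/
def IsCanonicalPath (r : V → V → Prop) (W : V → V → ℕ∞) (u v : V) (p : List V) : Prop :=
  IsShortestPath W u v p ∧ ∀ q, IsShortestPath W u v q → ¬List.Shortlex r q p

/-- The canonical path from `u` to `v`; an arbitrary list if there is none. -/
noncomputable def canonicalPath (r : V → V → Prop) (W : V → V → ℕ∞) (u v : V) : List V :=
  Classical.epsilon (IsCanonicalPath r W u v)

namespace IsCanonicalPath

theorem unique [Std.Trichotomous r] (hp : IsCanonicalPath r W u v p)
    (hq : IsCanonicalPath r W u v q) : p = q :=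
  Std.Trichotomous.trichotomous (r := List.Shortlex r) p q (hq.2 p hp.1) (hp.2 q hq.1)

theorem canonicalPath_eq [Std.Trichotomous r] (hp : IsCanonicalPath r W u v p) :
    canonicalPath r W u v = p :=
  (Classical.epsilon_spec ⟨p, hp⟩ : IsCanonicalPath r W u v _).unique hp

theorem of_append_cons (h : IsCanonicalPath r W u v (a ++ x :: b)) :
    IsCanonicalPath r W u x (a ++ [x]) ∧ IsCanonicalPath r W x v (x :: b) := by
  obtain ⟨ha, hb⟩ := h.1.of_append_cons
  refine ⟨⟨ha, fun q hq hlt => ?_⟩, hb, fun q hq hlt => ?_⟩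
  · obtain ⟨a', rfl⟩ := List.getLast?_eq_some_iff.1 hq.1.2.1
    exact h.2 _ (h.1.splice hq hb) (by simpa using shortlex_append_append hlt b)
  · obtain ⟨b', rfl⟩ := List.head?_eq_some_iff.1 hq.1.1
    exact h.2 _ (h.1.splice ha hq) (hlt.append_left a)

theorem take (hp : IsCanonicalPath r W u v p) {j : ℕ} (hj : j < p.length) :
    IsCanonicalPath r W u p[j] (p.take (j + 1)) := by
  rw [List.take_succ_eq_append_getElem hj]
  rw [← List.take_append_drop j p, List.drop_eq_getElem_cons hj] at hp
  exact hp.of_append_cons.1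

theorem drop (hp : IsCanonicalPath r W u v p) {i : ℕ} (hi : i < p.length) :
    IsCanonicalPath r W p[i] v (p.drop i) := by
  rw [List.drop_eq_getElem_cons hi]
  rw [← List.take_append_drop i p, List.drop_eq_getElem_cons hi] at hp
  exact hp.of_append_cons.2

theorem take_drop (hp : IsCanonicalPath r W u v p) {i j : ℕ} (hij : i ≤ j) (hj : j < p.length) :
    IsCanonicalPath r W p[i] p[j] ((p.drop i).take (j + 1 - i)) := by
  have hi : i < (p.take (j + 1)).length := by rw [List.length_take]; omega
  simpa only [List.drop_take, List.getElem_take] using (hp.take hj).drop hi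

theorem of_le_of_walkLen_eq (hW : W ≤ W') (hp : IsCanonicalPath r W u v p)
    (hlen : walkLen W' p = walkLen W p) : IsCanonicalPath r W' u v p := by
  have hp' : IsShortestPath W' u v p := hp.1.of_le_of_walkLen_eq hW hlen
  have hdist : gdist W' u v = gdist W u v := by rw [← hp'.2, hlen, hp.1.2]
  exact ⟨hp', fun q hq => hp.2 q (hq.of_ge_of_gdist_eq hW hdist)⟩

end IsCanonicalPath

theorem exists_isCanonicalPath [IsWellFounded V r] (h : gdist W u v ≠ ⊤) :
    ∃ p, IsCanonicalPath r W u v p :=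
  (List.Shortlex.wf (IsWellFounded.wf (r := r))).has_min {p | IsShortestPath W u v p}
    (exists_isShortestPath h)

theorem isCanonicalPath_canonicalPath [IsWellFounded V r] (h : gdist W u v ≠ ⊤) :
    IsCanonicalPath r W u v (canonicalPath r W u v) :=
  Classical.epsilon_spec (exists_isCanonicalPath h)

end

theorem exists_consistent_shortest_paths_all_graphs_general (V : Type*) :
    ∃ ρ : (V → V → ℕ∞) → V → V → List V,
      ∀ W : V → V → ℕ∞,
        (∀ u v, gdist W u v ≠ ⊤ → IsShortestPath W u v (ρ W u v)) ∧
        (∀ u v, gdist W u v ≠ ⊤ →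
          ∀ i j : ℕ, ∀ (hij : i ≤ j) (hj : j < (ρ W u v).length),
            ((ρ W u v).drop i).take (j + 1 - i) =
              ρ W ((ρ W u v).get ⟨i, lt_of_le_of_lt hij hj⟩) ((ρ W u v).get ⟨j, hj⟩)) ∧
        ∀ W' : V → V → ℕ∞, W ≤ W' →
          ∀ u v, gdist W u v ≠ ⊤ →
            (∀ q ∈ (ρ W u v).zip (ρ W u v).tail, W' q.1 q.2 = W q.1 q.2) →
            ρ W' u v = ρ W u v := by
  refine ⟨canonicalPath WellOrderingRel, fun W => ⟨fun u v h => ?_, fun u v h i j hij hj => ?_,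
    fun W' hW u v h hedges => ?_⟩⟩
  · exact (isCanonicalPath_canonicalPath h).1
  · exact ((isCanonicalPath_canonicalPath h).take_drop hij hj).canonicalPath_eq.symm
  · exact ((isCanonicalPath_canonicalPath h).of_le_of_walkLen_eq hW
      (walkLen_congr hedges)).canonicalPath_eq

theorem exists_consistent_shortest_paths_all_graphs {V : Type*} [Fintype V] :
    ∃ ρ : (V → V → ℕ∞) → V → V → List V,
      ∀ W : V → V → ℕ∞, (∀ x y, W x y ≠ 0) →
        (∀ u v, gdist W u v ≠ ⊤ → IsShortestPath W u v (ρ W u v)) ∧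
        (∀ u v, gdist W u v ≠ ⊤ →
          ∀ i j : ℕ, ∀ (hij : i ≤ j) (hj : j < (ρ W u v).length),
            ((ρ W u v).drop i).take (j + 1 - i) =
              ρ W ((ρ W u v).get ⟨i, lt_of_le_of_lt hij hj⟩) ((ρ W u v).get ⟨j, hj⟩)) ∧
        ∀ W' : V → V → ℕ∞, (∀ x y, W' x y = W x y ∨ W' x y = ⊤) →
          ∀ u v, gdist W u v ≠ ⊤ →
            (∀ q ∈ (ρ W u v).zip (ρ W u v).tail, W' q.1 q.2 = W q.1 q.2) →
            ρ W' u v = ρ W u v := by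
  obtain ⟨ρ, hρ⟩ := exists_consistent_shortest_paths_all_graphs_general V
  exact ⟨ρ, fun W _ => ⟨(hρ W).1, (hρ W).2.1, fun W' hsub => (hρ W).2.2 W' fun x y =>
    (hsub x y).elim Eq.ge fun h => h ▸ le_top⟩⟩
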